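/- (Conservation of the rescaled score along the high-probability ODE in the Gaussian case.) Let D be a positive natural number, α, σ : ℝ → ℝ smooth with α(t) > 0 and σ(t) > 0 for all t, λ(t) = log(α(t)²/σ(t)²), f(t) = (d/dt) log α(t), g(t)² = -λ'(t)·σ(t)². Let p : ℝ → ℝ^D → ℝ be smooth and everywhere positive, satisfying the linear-drift Fokker–Planck equation ∂_t p(t,x) = -div_x(f(t)·x·p(t,x)) + (1/2)·g(t)²·Δ_x p(t,x) for all t and x, and assume additionally that ∇_x(Δ_x log p)(s, x) = 0 for all s and x. If y : ℝ → ℝ^D is a differentiable curve satisfying the high-probability ODE y'(s) = f(s)·y(s) - g(s)²·∇_x log p(s, y(s)) for all s in an interval I, then the map s ↦ α(s)·∇_x log p(s, y(s)) is constant on I; in particular α(s)·∇_x log p(s, y(s)) = α(t)·∇_x log p(t, y(t)) for all s, t ∈ I. -/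

import Mathlib

open scoped BigOperators RealInnerProductSpace
open MeasureTheory

/-- Divergence of a vector field on `EuclideanSpace ℝ (Fin D)`. -/
noncomputable def divg {D : ℕ} (F : EuclideanSpace ℝ (Fin D) → EuclideanSpace ℝ (Fin D))
    (x : EuclideanSpace ℝ (Fin D)) : ℝ :=
  ∑ i, fderiv ℝ F x (EuclideanSpace.single i 1) i

/-- Laplacian of a scalar field on `EuclideanSpace ℝ (Fin D)`. -/
noncomputable def lap {D : ℕ} (f : EuclideanSpace ℝ (Fin D) → ℝ)
    (x : EuclideanSpace ℝ (Fin D)) : ℝ :=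
  divg (gradient f) x

/-!
The score `S = ∇ₓ log p` turns the Fokker–Planck equation into
`∂ₜ S = -∇ₓ(f ⟪x, S⟫) + (g² / 2) ∇ₓ(Δ log p + ‖S‖²)`. Its Jacobian `DS` is a Hessian, hence
self-adjoint, so `∇ₓ ⟪x, S⟫ = S + DS x` and `∇ₓ ‖S‖² = 2 DS S`. Along the ODE
`y' = f y - g² S(y)` the transport term `DS y'` cancels every term containing `DS`, leaving
`d/ds S(s, y s) = -f S + (g² / 2) ∇ₓ Δ log p`. Since `α' = f α`, multiplication by `α` removes the
linear term, and `∇ₓ Δ log p = 0` makes the product constant.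
-/

section PartialDerivatives

variable {E G : Type*} [NormedAddCommGroup E] [NormedSpace ℝ E] [NormedAddCommGroup G]
  [NormedSpace ℝ G] {u : ℝ → E → G} {t : ℝ} {x : E}

theorem hasDerivAt_uncurry_left (hu : DifferentiableAt ℝ (Function.uncurry u) (t, x)) :
    HasDerivAt (fun τ => u τ x) (fderiv ℝ (Function.uncurry u) (t, x) (1, 0)) t :=
  hu.hasFDerivAt.comp_hasDerivAt (f := fun τ => (τ, x)) t
    ((hasDerivAt_id t).prodMk (hasDerivAt_const t x))

theorem fderiv_uncurry_right (hu : DifferentiableAt ℝ (Function.uncurry u) (t, x)) (v : E) :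
    fderiv ℝ (u t) x v = fderiv ℝ (Function.uncurry u) (t, x) (0, v) :=
  DFunLike.congr_fun (hu.hasFDerivAt.comp x (hasFDerivAt_prodMk_right t x)).fderiv v

theorem hasDerivWithinAt_uncurry_comp {y : ℝ → E} {y' : E} {s : Set ℝ}
    (hu : DifferentiableAt ℝ (Function.uncurry u) (t, y t)) (hy : HasDerivWithinAt y y' s t) :
    HasDerivWithinAt (fun τ => u τ (y τ))
      (deriv (fun τ => u τ (y t)) t + fderiv ℝ (u t) (y t) y') s t := by
  rw [(hasDerivAt_uncurry_left hu).deriv, fderiv_uncurry_right hu, ← map_add, Prod.mk_add_mk,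
    add_zero, zero_add]
  exact hu.hasFDerivAt.comp_hasDerivWithinAt (f := fun τ => (τ, y τ)) t
    ((hasDerivWithinAt_id t s).prodMk hy)

theorem deriv_fderiv_comm (hu : ContDiff ℝ 2 (Function.uncurry u)) (v : E) :
    deriv (fun τ => fderiv ℝ (u τ) x v) t = fderiv ℝ (fun z => deriv (fun τ => u τ z) t) x v := by
  set U := Function.uncurry u
  have hU : Differentiable ℝ U := hu.differentiable two_ne_zero
  have hU' : Differentiable ℝ (fderiv ℝ U) :=
    (hu.fderiv_right (m := 1) (by norm_num)).differentiable one_ne_zero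
  have hDU : ∀ w, HasFDerivAt (fun q => fderiv ℝ U q w)
      ((fderiv ℝ (fderiv ℝ U) (t, x)).flip w) (t, x) := fun w =>
    (ContinuousLinearMap.apply ℝ G w).hasFDerivAt.comp _ (hU' (t, x)).hasFDerivAt
  have hspace : ∀ τ, fderiv ℝ (u τ) x v = fderiv ℝ U (τ, x) (0, v) := fun τ =>
    fderiv_uncurry_right (hU _) v
  have htime : ∀ z, deriv (fun τ => u τ z) t = fderiv ℝ U (t, z) (1, 0) := fun z =>
    (hasDerivAt_uncurry_left (hU _)).deriv
  calc deriv (fun τ => fderiv ℝ (u τ) x v) t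
      = fderiv ℝ (fderiv ℝ U) (t, x) (1, 0) (0, v) := by
        simp only [hspace]
        exact ((hDU _).comp_hasDerivAt (f := fun τ => (τ, x)) t
          ((hasDerivAt_id t).prodMk (hasDerivAt_const t x))).deriv
    _ = fderiv ℝ (fderiv ℝ U) (t, x) (0, v) (1, 0) :=
        (hu.contDiffAt.isSymmSndFDerivAt (by simp)).eq _ _
    _ = fderiv ℝ (fun z => deriv (fun τ => u τ z) t) x v := by
        simp only [htime]
        exact (DFunLike.congr_fun
          ((hDU _).comp x (hasFDerivAt_prodMk_right t x)).fderiv v).symm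

end PartialDerivatives

section Gradient

variable {E : Type*} [NormedAddCommGroup E] [InnerProductSpace ℝ E] [CompleteSpace E]

theorem contDiffAt_gradient_comp {P : Type*} [NormedAddCommGroup P] [NormedSpace ℝ P]
    {u : P → E → ℝ} {c : P → E} {p₀ : P} {m n : WithTop ℕ∞}
    (hu : ContDiffAt ℝ n (Function.uncurry u) (p₀, c p₀)) (hc : ContDiffAt ℝ m c p₀)
    (hmn : m + 1 ≤ n) : ContDiffAt ℝ m (fun q => gradient (u q) (c q)) p₀ :=
  (InnerProductSpace.toDual ℝ E).symm.contDiff.contDiffAt.comp p₀ (hu.fderiv hc hmn)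

theorem contDiffAt_gradient {u : E → ℝ} {x : E} {m n : WithTop ℕ∞} (hu : ContDiffAt ℝ n u x)
    (hmn : m + 1 ≤ n) : ContDiffAt ℝ m (gradient u) x :=
  (InnerProductSpace.toDual ℝ E).symm.contDiff.contDiffAt.comp x (hu.fderiv_right hmn)

theorem differentiableAt_gradient {u : E → ℝ} {x : E} (hu : ContDiffAt ℝ 2 u x) :
    DifferentiableAt ℝ (gradient u) x :=
  (contDiffAt_gradient (m := 1) hu (by norm_num)).differentiableAt one_ne_zero

theorem inner_fderiv_gradient {u : E → ℝ} {x : E} (hu : ContDiffAt ℝ 2 u x) (v w : E) :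
    ⟪fderiv ℝ (gradient u) x v, w⟫ = fderiv ℝ (fderiv ℝ u) x v w := by
  have hu' : DifferentiableAt ℝ (fderiv ℝ u) x :=
    (hu.fderiv_right (m := 1) (by norm_num)).differentiableAt one_ne_zero
  have hinner := fderiv_inner_apply ℝ (differentiableAt_gradient hu)
    (differentiableAt_const w) v
  simp only [inner_gradient_left] at hinner
  rw [fderiv_clm_apply hu' (differentiableAt_const w)] at hinner
  simpa using hinner.symm

theorem isSelfAdjoint_fderiv_gradient {u : E → ℝ} {x : E} (hu : ContDiffAt ℝ 2 u x) :
    IsSelfAdjoint (fderiv ℝ (gradient u) x) := by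
  rw [ContinuousLinearMap.isSelfAdjoint_iff_isSymmetric]
  intro v w
  have hsymm : IsSymmSndFDerivAt ℝ u x := hu.isSymmSndFDerivAt (by simp)
  simp only [ContinuousLinearMap.coe_coe]
  rw [inner_fderiv_gradient hu, real_inner_comm, inner_fderiv_gradient hu, hsymm.eq]

theorem hasGradientAt_inner {F G : E → E} {F' G' : E →L[ℝ] E} {x : E}
    (hF : HasFDerivAt F F' x) (hG : HasFDerivAt G G' x) :
    HasGradientAt (fun z => ⟪F z, G z⟫)
      (ContinuousLinearMap.adjoint F' (G x) + ContinuousLinearMap.adjoint G' (F x)) x := by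
  rw [hasGradientAt_iff_hasFDerivAt]
  refine (hF.inner ℝ hG).congr_fderiv (ContinuousLinearMap.ext fun v => ?_)
  simp [ContinuousLinearMap.adjoint_inner_left, real_inner_comm, add_comm]

theorem hasGradientAt_inner_gradient_id {u : E → ℝ} {x : E} (hu : ContDiffAt ℝ 2 u x) :
    HasGradientAt (fun z => ⟪gradient u z, z⟫)
      (gradient u x + fderiv ℝ (gradient u) x x) x := by
  have h := hasGradientAt_inner (differentiableAt_gradient hu).hasFDerivAt (hasFDerivAt_id x)
  rw [(isSelfAdjoint_fderiv_gradient hu).adjoint_eq] at h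
  simpa only [id_eq, ContinuousLinearMap.adjoint_id, ContinuousLinearMap.id_apply, add_comm]
    using h

theorem hasGradientAt_norm_gradient_sq {u : E → ℝ} {x : E} (hu : ContDiffAt ℝ 2 u x) :
    HasGradientAt (fun z => ‖gradient u z‖ ^ 2)
      ((2 : ℝ) • fderiv ℝ (gradient u) x (gradient u x)) x := by
  have hDu := (differentiableAt_gradient hu).hasFDerivAt
  have h := hasGradientAt_inner hDu hDu
  rw [(isSelfAdjoint_fderiv_gradient hu).adjoint_eq, ← two_smul ℝ] at h
  simpa only [real_inner_self_eq_norm_sq] using h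

theorem deriv_gradient_comm {u : ℝ → E → ℝ} {t : ℝ} {x : E}
    (hu : ContDiff ℝ 2 (Function.uncurry u)) :
    deriv (fun τ => gradient (u τ) x) t = gradient (fun z => deriv (fun τ => u τ z) t) x := by
  have hgrad : DifferentiableAt ℝ (fun τ => gradient (u τ) x) t :=
    (contDiffAt_gradient_comp (m := 1) hu.contDiffAt contDiffAt_const
      (by norm_num)).differentiableAt one_ne_zero
  refine ext_inner_right ℝ fun v => ?_
  calc ⟪deriv (fun τ => gradient (u τ) x) t, v⟫
      = deriv (fun τ => ⟪gradient (u τ) x, v⟫) t := by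
        simpa using ((hgrad.hasDerivAt.inner ℝ (hasDerivAt_const t v)).deriv).symm
    _ = ⟪gradient (fun z => deriv (fun τ => u τ z) t) x, v⟫ := by
        simp only [inner_gradient_left, deriv_fderiv_comm hu]

/-- The score `∇ log p` of a density `p`. -/
noncomputable def score (p : E → ℝ) : E → E :=
  gradient fun z => Real.log (p z)

theorem gradient_eq_smul_score {p : E → ℝ} {x : E} (hp : DifferentiableAt ℝ p x)
    (hpx : p x ≠ 0) : gradient p x = p x • score p x := by
  refine ext_inner_right ℝ fun v => ?_
  rw [real_inner_smul_left, score, inner_gradient_left, inner_gradient_left, fderiv.log hp hpx]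
  simp [hpx]

end Gradient

section Divergence

variable {D : ℕ} {x : EuclideanSpace ℝ (Fin D)}

theorem contDiffAt_divg {F : EuclideanSpace ℝ (Fin D) → EuclideanSpace ℝ (Fin D)}
    {m n : WithTop ℕ∞} (hF : ContDiffAt ℝ n F x) (hmn : m + 1 ≤ n) :
    ContDiffAt ℝ m (divg F) x := by
  refine ContDiffAt.sum fun i _ => ?_
  exact (EuclideanSpace.proj (𝕜 := ℝ) i).contDiff.contDiffAt.comp x
    ((hF.fderiv_right hmn).clm_apply contDiffAt_const)

theorem contDiffAt_lap {u : EuclideanSpace ℝ (Fin D) → ℝ} {m n : WithTop ℕ∞}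
    (hu : ContDiffAt ℝ n u x) (hmn : m + 2 ≤ n) : ContDiffAt ℝ m (lap u) x :=
  contDiffAt_divg (contDiffAt_gradient (m := m + 1) hu
    (by rwa [add_assoc, one_add_one_eq_two])) le_rfl

theorem divg_smul {φ : EuclideanSpace ℝ (Fin D) → ℝ}
    {F : EuclideanSpace ℝ (Fin D) → EuclideanSpace ℝ (Fin D)}
    (hφ : DifferentiableAt ℝ φ x) (hF : DifferentiableAt ℝ F x) :
    divg (fun z => φ z • F z) x = φ x * divg F x + ⟪gradient φ x, F x⟫ := by
  have hFx : F x = ∑ i, F x i • EuclideanSpace.single i (1 : ℝ) := by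
    simpa using ((EuclideanSpace.basisFun (Fin D) ℝ).sum_repr (F x)).symm
  have hderiv : fderiv ℝ φ x (F x) = ∑ i, F x i * fderiv ℝ φ x (EuclideanSpace.single i 1) := by
    conv_lhs => rw [hFx]
    simp
  rw [inner_gradient_left, hderiv]
  simp [divg, fderiv_fun_smul hφ hF, Finset.sum_add_distrib, Finset.mul_sum, mul_comm]

theorem divg_const_smul_id (c : ℝ) :
    divg (fun z : EuclideanSpace ℝ (Fin D) => c • z) x = c * D := by
  have h : fderiv ℝ (fun z : EuclideanSpace ℝ (Fin D) => c • z) x = c • .id ℝ _ :=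
    ((hasFDerivAt_id x).const_smul c).fderiv
  simp [divg, h, mul_comm]

theorem lap_eq_mul_lap_log_add {p : EuclideanSpace ℝ (Fin D) → ℝ} (hp : ContDiff ℝ 2 p)
    (hp0 : ∀ z, p z ≠ 0) :
    lap p x = p x * (lap (fun z => Real.log (p z)) x + ‖score p x‖ ^ 2) := by
  have hdiff : Differentiable ℝ p := hp.differentiable two_ne_zero
  have hgrad : gradient p = fun z => p z • score p z :=
    funext fun z => gradient_eq_smul_score (hdiff z) (hp0 z)
  have hscore : DifferentiableAt ℝ (score p) x :=
    differentiableAt_gradient (hp.contDiffAt.log (hp0 x))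
  calc lap p x = divg (fun z => p z • score p z) x := by rw [lap, hgrad]
    _ = p x * divg (score p) x + ⟪gradient p x, score p x⟫ := divg_smul (hdiff x) hscore
    _ = p x * (lap (fun z => Real.log (p z)) x + ‖score p x‖ ^ 2) := by
      rw [gradient_eq_smul_score (hdiff x) (hp0 x), real_inner_smul_left,
        real_inner_self_eq_norm_sq, mul_add]
      rfl

end Divergence

section FokkerPlanck

variable {D : ℕ}

/-- The Fokker–Planck equation for `p` at time `t`, with drift `x ↦ a • x` and squared diffusion
coefficient `b`; the coefficients are their values at time `t`. -/
def FokkerPlanckAt (a b : ℝ) (p : ℝ → EuclideanSpace ℝ (Fin D) → ℝ) (t : ℝ) : Prop :=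
  ∀ x, deriv (fun τ => p τ x) t
    = - divg (fun z => p t z • (a • z)) x + (1 / 2) * b * lap (p t) x

variable {a b : ℝ} {p : ℝ → EuclideanSpace ℝ (Fin D) → ℝ} {t : ℝ}

namespace FokkerPlanckAt

theorem deriv_log (hFP : FokkerPlanckAt a b p t) (hp : ContDiff ℝ 2 (Function.uncurry p))
    (hp0 : ∀ τ z, p τ z ≠ 0) (x : EuclideanSpace ℝ (Fin D)) :
    deriv (fun τ => Real.log (p τ x)) t
      = - (a * D) - a * ⟪score (p t) x, x⟫
        + (b / 2) * (lap (fun z => Real.log (p t z)) x + ‖score (p t) x‖ ^ 2) := by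
  have hpt : ContDiff ℝ 2 (p t) := hp.comp (contDiff_const.prodMk contDiff_id)
  have hpx : DifferentiableAt ℝ (p t) x := hpt.differentiable two_ne_zero x
  have htime : DifferentiableAt ℝ (fun τ => p τ x) t :=
    (hasDerivAt_uncurry_left (hp.differentiable two_ne_zero _)).differentiableAt
  rw [deriv.log htime (hp0 t x), hFP x, divg_smul hpx (by fun_prop), divg_const_smul_id,
    lap_eq_mul_lap_log_add hpt (hp0 t), gradient_eq_smul_score hpx (hp0 t x),
    real_inner_smul_left, real_inner_smul_right]
  field_simp [hp0 t x]
  ring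

theorem deriv_score (hFP : FokkerPlanckAt a b p t) (hp : ContDiff ℝ 3 (Function.uncurry p))
    (hp0 : ∀ τ z, p τ z ≠ 0) (x : EuclideanSpace ℝ (Fin D)) :
    deriv (fun τ => score (p τ) x) t
      = - (a • (score (p t) x + fderiv ℝ (score (p t)) x x))
        + (b / 2) • (gradient (lap fun z => Real.log (p t z)) x
          + (2 : ℝ) • fderiv ℝ (score (p t)) x (score (p t) x)) := by
  have hlogp : ContDiff ℝ 3 (Function.uncurry fun τ z => Real.log (p τ z)) :=
    hp.log fun q => hp0 q.1 q.2
  have hu : ContDiffAt ℝ 3 (fun z => Real.log (p t z)) x :=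
    (hlogp.comp (contDiff_const.prodMk contDiff_id)).contDiffAt
  have hu2 : ContDiffAt ℝ 2 (fun z => Real.log (p t z)) x := hu.of_le (by norm_num)
  have hdrift : HasGradientAt (fun z => ⟪score (p t) z, z⟫)
      (score (p t) x + fderiv ℝ (score (p t)) x x) x := hasGradientAt_inner_gradient_id hu2
  have hnorm : HasGradientAt (fun z => ‖score (p t) z‖ ^ 2)
      ((2 : ℝ) • fderiv ℝ (score (p t)) x (score (p t) x)) x := hasGradientAt_norm_gradient_sq hu2
  have hlap : HasGradientAt (lap fun z => Real.log (p t z))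
      (gradient (lap fun z => Real.log (p t z)) x) x :=
    ((contDiffAt_lap (m := 1) hu (by norm_num)).differentiableAt one_ne_zero).hasGradientAt
  have hrhs := ((hdrift.hasFDerivAt.const_mul a).const_sub (-(a * D))).add
    ((hlap.hasFDerivAt.add hnorm.hasFDerivAt).const_mul (b / 2))
  calc deriv (fun τ => score (p τ) x) t
      = gradient (fun z => deriv (fun τ => Real.log (p τ z)) t) x :=
        deriv_gradient_comm (hlogp.of_le (by norm_num))
    _ = _ := by
      simp only [hFP.deriv_log (hp.of_le (by norm_num)) hp0]
      refine (hasGradientAt_iff_hasFDerivAt.2 (hrhs.congr_fderiv ?_)).gradient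
      simp only [map_add, map_neg, map_smul]

theorem hasDerivWithinAt_score (hFP : FokkerPlanckAt a b p t)
    (hp : ContDiff ℝ 3 (Function.uncurry p)) (hp0 : ∀ τ z, p τ z ≠ 0)
    {y : ℝ → EuclideanSpace ℝ (Fin D)} {s : Set ℝ}
    (hy : HasDerivWithinAt y (a • y t - b • score (p t) (y t)) s t) :
    HasDerivWithinAt (fun τ => score (p τ) (y τ))
      ((b / 2) • gradient (lap fun z => Real.log (p t z)) (y t) - a • score (p t) (y t)) s t := by
  have hlogp : ContDiff ℝ 3 fun q : (ℝ × EuclideanSpace ℝ (Fin D)) × EuclideanSpace ℝ (Fin D) =>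
      Real.log (p q.1.1 q.2) :=
    (hp.comp (contDiff_fst.fst.prodMk contDiff_snd)).log fun q => hp0 q.1.1 q.2
  have hscore : ContDiffAt ℝ 1 (Function.uncurry fun τ => score (p τ)) (t, y t) :=
    contDiffAt_gradient_comp (u := fun q z => Real.log (p q.1 z)) (c := Prod.snd)
      hlogp.contDiffAt contDiffAt_snd (by norm_num)
  refine (hasDerivWithinAt_uncurry_comp (hscore.differentiableAt one_ne_zero) hy).congr_deriv ?_
  rw [hFP.deriv_score hp hp0, map_sub, map_smul, map_smul]
  module

theorem hasDerivWithinAt_smul_score (hFP : FokkerPlanckAt a b p t)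
    (hp : ContDiff ℝ 3 (Function.uncurry p)) (hp0 : ∀ τ z, p τ z ≠ 0)
    {α : ℝ → ℝ} {y : ℝ → EuclideanSpace ℝ (Fin D)} {s : Set ℝ}
    (hα : HasDerivWithinAt α (a * α t) s t)
    (hy : HasDerivWithinAt y (a • y t - b • score (p t) (y t)) s t) :
    HasDerivWithinAt (fun τ => α τ • score (p τ) (y τ))
      ((α t * (b / 2)) • gradient (lap fun z => Real.log (p t z)) (y t)) s t := by
  refine (hα.smul (hFP.hasDerivWithinAt_score hp hp0 hy)).congr_deriv ?_
  module

end FokkerPlanckAt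

end FokkerPlanck

theorem hasDerivAt_deriv_log_mul {α : ℝ → ℝ} {t : ℝ} (hα : DifferentiableAt ℝ α t)
    (hαt : α t ≠ 0) : HasDerivAt α (deriv (fun u => Real.log (α u)) t * α t) t := by
  rw [deriv.log hα hαt, div_mul_cancel₀ _ hαt]
  exact hα.hasDerivAt

theorem rescaled_score_conserved_hp_ode_general {D : ℕ} {α f gsq : ℝ → ℝ}
    {p : ℝ → EuclideanSpace ℝ (Fin D) → ℝ} (hp : ContDiff ℝ 3 (Function.uncurry p))
    (hppos : ∀ t x, 0 < p t x) {I : Set ℝ} (hI : Convex ℝ I)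
    (hα : ∀ s ∈ I, HasDerivWithinAt α (f s * α s) I s)
    (hFP : ∀ s ∈ I, FokkerPlanckAt (f s) (gsq s) p s)
    {y : ℝ → EuclideanSpace ℝ (Fin D)}
    (hy : ∀ s ∈ I, HasDerivWithinAt y (f s • y s - gsq s • score (p s) (y s)) I s)
    (hlap : ∀ s ∈ I, gradient (lap fun z => Real.log (p s z)) (y s) = 0)
    {s t : ℝ} (hs : s ∈ I) (ht : t ∈ I) :
    α s • score (p s) (y s) = α t • score (p t) (y t) := by
  have hderiv : ∀ r ∈ I, HasDerivWithinAt (fun τ => α τ • score (p τ) (y τ)) 0 I r := by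
    intro r hr
    simpa [hlap r hr] using (hFP r hr).hasDerivWithinAt_smul_score hp
      (fun τ z => (hppos τ z).ne') (hα r hr) (hy r hr)
  have hbound := hI.norm_image_sub_le_of_norm_hasDerivWithin_le (C := 0) hderiv (by simp) ht hs
  simpa [sub_eq_zero] using hbound

/-- Conservation of the rescaled score `s ↦ α(s)·∇ log p(s, y(s))`
along the high-probability ODE when `∇(Δ log p) ≡ 0` (Gaussian case, Appendix H). -/
theorem rescaled_score_conserved_hp_ode {D : ℕ} (hD : 0 < D)
    (α σ : ℝ → ℝ) (hα : ContDiff ℝ (⊤ : ℕ∞) α) (hσ : ContDiff ℝ (⊤ : ℕ∞) σ)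
    (hαpos : ∀ t, 0 < α t) (hσpos : ∀ t, 0 < σ t)
    (lam f gsq : ℝ → ℝ)
    (hlam : ∀ t, lam t = Real.log (α t ^ 2 / σ t ^ 2))
    (hf : ∀ t, f t = deriv (fun u => Real.log (α u)) t)
    (hgsq : ∀ t, gsq t = -(deriv lam t) * σ t ^ 2)
    (p : ℝ → EuclideanSpace ℝ (Fin D) → ℝ)
    (hp : ContDiff ℝ (⊤ : ℕ∞) (fun q : ℝ × EuclideanSpace ℝ (Fin D) => p q.1 q.2))
    (hppos : ∀ t x, 0 < p t x)
    (hFP : ∀ t x, deriv (fun τ => p τ x) t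
      = - divg (fun y => p t y • (f t • y)) x + (1 / 2) * gsq t * lap (p t) x)
    (hgauss : ∀ s x, gradient (fun z => lap (fun w => Real.log (p s w)) z) x = 0)
    (I : Set ℝ) (hI : Convex ℝ I)
    (y : ℝ → EuclideanSpace ℝ (Fin D))
    (hy : ∀ s ∈ I, HasDerivAt y
      (f s • y s - gsq s • gradient (fun z => Real.log (p s z)) (y s)) s) :
    ∀ s ∈ I, ∀ t ∈ I,
      α s • gradient (fun z => Real.log (p s z)) (y s)
        = α t • gradient (fun z => Real.log (p t z)) (y t) := by
  intro s hs t ht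
  exact rescaled_score_conserved_hp_ode_general (hp.of_le (by norm_cast)) hppos hI
    (fun r _ => hf r ▸ (hasDerivAt_deriv_log_mul (hα.differentiable (by simp) r)
      (hαpos r).ne').hasDerivWithinAt)
    (fun r _ => hFP r) (fun r hr => (hy r hr).hasDerivWithinAt) (fun r _ => hgauss r (y r)) hs ht
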